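/- Let ω : (0,π] → (0,∞) be continuous and increasing, with t ↦ ω(t^γ) concave for some γ > 2 and t ↦ tω'(t)/ω(t) increasing, let E ⊆ 𝕋 be a Carleson set of Lebesgue measure zero with log ω(dist(·,E)) ∈ L¹(𝕋), and let ζ ∈ 𝕋∖E. Then: (i) D_{ζ, I(ζ,E)}(f_{ω,E}) ≲ dist(ζ,E) ω'(dist(ζ,E))²; (ii) D_{ζ, Σ(ζ,E)}(f_{ω,E}) ≲ dist(ζ,E) ω'(dist(ζ,E))²; (iii) D_ζ(f_{ω,E}) ≳ dist(ζ,E) ω'(dist(ζ,E))², where all implied constants depend only on γ. -/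

import Mathlib

open MeasureTheory Real Set

noncomputable section

/-- The unit circle in `ℂ`. -/
def circleT : Set ℂ := Metric.sphere (0 : ℂ) 1

/-- Arc-length parametrization of the unit circle. -/
def cpt (θ : ℝ) : ℂ := Complex.exp (θ * Complex.I)

/-- Distance from a point to a set. -/
def dE (E : Set ℂ) (ζ : ℂ) : ℝ := Metric.infDist ζ E

/-- Arc-length integral over the whole circle. -/
def circInt (f : ℂ → ℝ) : ℝ := ∫ θ in Set.Ioc 0 (2 * π), f (cpt θ)

/-- Arc-length integral over a subset `Λ` of the circle. -/
def circIntOn (Λ : Set ℂ) (f : ℂ → ℝ) : ℝ :=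
  ∫ θ in {θ ∈ Set.Ioc 0 (2 * π) | cpt θ ∈ Λ}, f (cpt θ)

/-- `E` has arc-length (Lebesgue) measure zero. -/
def MeasureZeroOnCircle (E : Set ℂ) : Prop :=
  volume {θ ∈ Set.Ioc 0 (2 * π) | cpt θ ∈ E} = 0

/-- `E` is a Carleson set: `∫_𝕋 log dist(ζ,E) |dζ| > -∞`. -/
def CarlesonSet (E : Set ℂ) : Prop :=
  IntegrableOn (fun θ => Real.log (dE E (cpt θ))) (Set.Ioc 0 (2 * π)) volume

/-- `I(ζ,E)`: the connected component of `𝕋 \ E` containing `ζ`. -/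
def compArc (E : Set ℂ) (ζ : ℂ) : Set ℂ := connectedComponentIn (circleT \ E) ζ

/-- `Γ(ζ,E)`. -/
def GammaSet (E : Set ℂ) (ζ : ℂ) : Set ℂ :=
  {ζ' ∈ circleT \ compArc E ζ | dE E ζ' ≤ dE E ζ}

/-- `Σ(ζ,E)`. -/
def SigmaSet (E : Set ℂ) (ζ : ℂ) : Set ℂ :=
  {ζ' ∈ circleT \ compArc E ζ | dE E ζ ≤ dE E ζ'}

/-- The Richter–Sundberg integrand for the outer function with boundary modulus
`ω(dist(·,E))`. -/
def RSker (ω : ℝ → ℝ) (E : Set ℂ) (ζ ζ' : ℂ) : ℝ :=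
  ((ω (dE E ζ')) ^ 2 - (ω (dE E ζ)) ^ 2
    - 2 * (ω (dE E ζ)) ^ 2 * Real.log (ω (dE E ζ') / ω (dE E ζ))) / ‖ζ - ζ'‖ ^ 2

/-- Local Dirichlet integral `D_ζ(f_{ω,E})` (Richter–Sundberg formula). -/
def locDir (ω : ℝ → ℝ) (E : Set ℂ) (ζ : ℂ) : ℝ :=
  (1 / (2 * π)) * circInt (fun ζ' => RSker ω E ζ ζ')

/-- Local Dirichlet integral restricted to `Λ`. -/
def locDirOn (ω : ℝ → ℝ) (E : Set ℂ) (Λ : Set ℂ) (ζ : ℂ) : ℝ :=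
  (1 / (2 * π)) * circIntOn Λ (fun ζ' => RSker ω E ζ ζ')

/-- `E` is an `𝓛₁`-set. -/
def L1Set (E : Set ℂ) : Prop :=
  ∃ C > 0, ∀ ζ ∈ circleT \ E,
    circIntOn (GammaSet E ζ)
      (fun ζ' => Real.log (dE E ζ / dE E ζ') / ‖ζ - ζ'‖ ^ 2) ≤ C / dE E ζ

/-- The `𝓛₂` inequality with constant `C`. -/
def L2With (E : Set ℂ) (C : ℝ) : Prop :=
  ∀ ζ ∈ circleT \ E,
    circIntOn (GammaSet E ζ)
      (fun ζ' => (Real.log (dE E ζ / dE E ζ')) ^ 2 / ‖ζ - ζ'‖ ^ 2) ≤ C / dE E ζ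

/-- `E` is an `𝓛₂`-set. -/
def L2Set (E : Set ℂ) : Prop := ∃ C > 0, L2With E C

/-- Supremum of `dist(·,E)` over the arc `cpt '' (a,b]`. -/
def arcSup (E : Set ℂ) (a b : ℝ) : ℝ := sSup ((fun θ => dE E (cpt θ)) '' Set.Ioc a b)

/-- `E` is a `𝒦`-set (Kotochigov). -/
def KSet (E : Set ℂ) : Prop :=
  ∃ c > 0, ∀ a b : ℝ, a < b → b ≤ a + 2 * π → c * (b - a) ≤ arcSup E a b

/-- Integral of a weight over the arc `cpt '' (a,b]` (with respect to arc length). -/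
def arcInt (w : ℂ → ℝ) (a b : ℝ) : ℝ := ∫ θ in Set.Ioc a b, w (cpt θ)

/-- Double logarithmic integral of a weight over an arc. -/
def arcDouble (w : ℂ → ℝ) (a b : ℝ) : ℝ :=
  ∫ θ in Set.Ioc a b, (∫ θ' in Set.Ioc a b,
    Real.log (1 / ‖cpt θ - cpt θ'‖) * w (cpt θ) * w (cpt θ'))

/-- Arc-length measure of `{ζ ∈ I : dist(ζ,E) ≤ t}` for the arc `cpt '' (a,b]`. -/
def sublevelMeas (E : Set ℂ) (a b t : ℝ) : ℝ :=
  (volume {θ ∈ Set.Ioc a b | dE E (cpt θ) ≤ t}).toReal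

/-- Arc-length measure of `E_t = {ζ ∈ 𝕋 : dist(ζ,E) ≤ t}`. -/
def EtMeas (E : Set ℂ) (t : ℝ) : ℝ := sublevelMeas E 0 (2 * π) t

/-- The open unit disc. -/
def unitDisc : Set ℂ := Metric.ball (0 : ℂ) 1

/-- Membership in the (holomorphic) Dirichlet space `𝒟`. -/
def MemDirichlet (f : ℂ → ℂ) : Prop :=
  DifferentiableOn ℂ f unitDisc ∧
  (∃ M : ℝ, ∀ r ∈ Set.Ioo (0 : ℝ) 1,
    (∫ θ in Set.Ioc 0 (2 * π), ‖f ((r : ℂ) * cpt θ)‖ ^ 2) ≤ M) ∧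
  IntegrableOn (fun z => ‖deriv f z‖ ^ 2) unitDisc volume

/-- `f` is a multiplier of the Dirichlet space `𝒟`. -/
def IsMultiplierD (f : ℂ → ℂ) : Prop :=
  ∀ g : ℂ → ℂ, MemDirichlet g → MemDirichlet (fun z => f z * g z)

/-- The outer function `f_{ω,E}` with boundary modulus `ω(dist(·,E))`. -/
def outerFun (ω : ℝ → ℝ) (E : Set ℂ) (z : ℂ) : ℂ :=
  Complex.exp ((((2 * π)⁻¹ : ℝ) : ℂ) * ∫ θ in Set.Ioc 0 (2 * π),
    ((cpt θ + z) / (cpt θ - z)) * ((Real.log (ω (dE E (cpt θ))) : ℝ) : ℂ))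

/-- `log ω(dist(·,E)) ∈ L¹(𝕋)`. -/
def LogOmegaInt (ω : ℝ → ℝ) (E : Set ℂ) : Prop :=
  IntegrableOn (fun θ => Real.log (ω (dE E (cpt θ)))) (Set.Ioc 0 (2 * π)) volume

/-- Standing hypotheses on `ω` (with derivative `ω'`): continuous, positive, increasing on
`(0,π]`, differentiable with derivative `ω'`, `t ↦ ω(t^γ)` concave, and `t ↦ tω'(t)/ω(t)`
increasing. -/
def OmegaHyp (ω ω' : ℝ → ℝ) (γ : ℝ) : Prop :=
  ContinuousOn ω (Set.Ioc 0 π) ∧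
  (∀ t ∈ Set.Ioc (0 : ℝ) π, 0 < ω t) ∧
  MonotoneOn ω (Set.Ioc 0 π) ∧
  (∀ t ∈ Set.Ioo (0 : ℝ) π, HasDerivAt ω (ω' t) t) ∧
  ConcaveOn ℝ (Set.Ioc 0 (π ^ γ⁻¹)) (fun t => ω (t ^ γ)) ∧
  MonotoneOn (fun t => t * ω' t / ω t) (Set.Ioo 0 π)

/-- The generalized Cantor set `E_{(ζ_n)}` (with `ξ k` playing the role of `ζ_{k+1}`). -/
def gCantorSet (ξ : ℕ → ℝ) : Set ℂ :=
  {z | ∃ ε : ℕ → Bool, z = Complex.exp (((2 * π : ℝ) : ℂ) * Complex.I *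
    ((∑' n : ℕ, (if ε n then (1 : ℝ) else 0) * (∏ k ∈ Finset.range n, ξ k) * (1 - ξ n) : ℝ) : ℂ))}

end


/-- The part of the Richter–Sundberg integrand depending only on the boundary moduli. -/
noncomputable def rsNum (p q : ℝ) : ℝ := p ^ 2 - q ^ 2 - 2 * q ^ 2 * Real.log (p / q)

lemma rsNum_nonneg {p q : ℝ} (hp : 0 < p) (hq : 0 < q) : 0 ≤ rsNum p q := by
  have h := Real.log_le_sub_one_of_pos (x := (p / q) ^ 2) (by positivity)
  rw [Real.log_pow] at h
  push_cast at h
  have h2 := mul_le_mul_of_nonneg_left h (sq_nonneg q)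
  have h3 : q ^ 2 * ((p / q) ^ 2 - 1) = p ^ 2 - q ^ 2 := by field_simp
  unfold rsNum
  linarith

lemma rsNum_le_of_le {p q : ℝ} (hq : 0 < q) (h : q ≤ p) : rsNum p q ≤ 3 * (p - q) ^ 2 := by
  have hp : 0 < p := hq.trans_le h
  have h1 := Real.one_sub_inv_le_log_of_pos (div_pos hp hq)
  rw [inv_div] at h1
  have h2 := mul_le_mul_of_nonneg_left h1 (sq_nonneg q)
  have h3 : 3 * (p - q) ^ 2 - (p ^ 2 - q ^ 2 - 2 * (q ^ 2 * (1 - q / p)))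
      = 2 * (p - q) ^ 3 / p := by
    field_simp
    ring
  have h4 : 0 ≤ 2 * (p - q) ^ 3 / p := by
    have := sub_nonneg.2 h
    positivity
  unfold rsNum
  linarith

lemma rsNum_le_log_sq {p q : ℝ} (hp : 0 < p) (h : p ≤ q) :
    rsNum p q ≤ 4 * q ^ 2 * Real.log (q / p) ^ 2 := by
  have hq : 0 < q := hp.trans_le h
  set L := Real.log (q / p) with hL
  have hL0 : 0 ≤ L := Real.log_nonneg ((one_le_div hp).2 h)
  have hlog : Real.log (p / q) = -L := by rw [hL, ← Real.log_inv, inv_div]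
  have hpq : p = q * Real.exp (-L) := by
    rw [← hlog, Real.exp_log (div_pos hp hq)]
    field_simp
  have hexp : Real.exp (-L) ^ 2 * (1 + 2 * L) ≤ 1 := by
    have h1 : 1 + 2 * L ≤ Real.exp (2 * L) := by linarith [Real.add_one_le_exp (2 * L)]
    calc Real.exp (-L) ^ 2 * (1 + 2 * L) ≤ Real.exp (-L) ^ 2 * Real.exp (2 * L) := by gcongr
      _ = 1 := by
        rw [← Real.exp_nat_mul, ← Real.exp_add]
        simp
  have hmain : Real.exp (-L) ^ 2 - 1 + 2 * L ≤ 4 * L ^ 2 := by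
    have h2 : (Real.exp (-L) ^ 2 - 1 + 2 * L) * (1 + 2 * L) ≤ 4 * L ^ 2 * (1 + 2 * L) := by
      nlinarith [pow_nonneg hL0 3]
    exact le_of_mul_le_mul_right h2 (by linarith)
  have h5 : rsNum p q = q ^ 2 * (Real.exp (-L) ^ 2 - 1 + 2 * L) := by
    unfold rsNum
    rw [hlog]
    nth_rewrite 1 [hpq]
    ring
  rw [h5]
  nlinarith [mul_le_mul_of_nonneg_left hmain (sq_nonneg q)]

lemma sub_sq_le_rsNum {p q : ℝ} (hp : 0 < p) (h : p ≤ q) : (q - p) ^ 2 ≤ rsNum p q := by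
  have hq : 0 < q := hp.trans_le h
  have h1 := Real.log_le_sub_one_of_pos (div_pos hp hq)
  have h2 := mul_le_mul_of_nonneg_left h1 (sq_nonneg q)
  have h3 : q ^ 2 * (p / q - 1) = q * p - q ^ 2 := by field_simp
  unfold rsNum
  linarith

lemma RSker_eq (ω : ℝ → ℝ) (E : Set ℂ) (ζ ζ' : ℂ) :
    RSker ω E ζ ζ' = rsNum (ω (dE E ζ')) (ω (dE E ζ)) / ‖ζ - ζ'‖ ^ 2 := rfl

section Weight

variable {ω ω' : ℝ → ℝ} {γ : ℝ}

lemma OmegaHyp.sub_le_tangent (h : OmegaHyp ω ω' γ) (hγ : 2 < γ) {u v : ℝ} (hu : 0 < u)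
    (huπ : u < π) (hv : 0 < v) (hvπ : v ≤ π) :
    ω v - ω u ≤ γ * u * ω' u * ((v / u) ^ γ⁻¹ - 1) := by
  obtain ⟨-, -, -, hd, hc, -⟩ := h
  have hγ0 : 0 < γ := by linarith
  have ha : 0 < γ⁻¹ := inv_pos.2 hγ0
  have hpow : ∀ t : ℝ, 0 < t → (t ^ γ⁻¹) ^ γ = t := fun t ht =>
    Real.rpow_inv_rpow ht.le hγ0.ne'
  have hmem : ∀ t : ℝ, 0 < t → t ≤ π → t ^ γ⁻¹ ∈ Set.Ioc 0 (π ^ γ⁻¹) := fun t ht htπ =>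
    ⟨Real.rpow_pos_of_pos ht _, Real.rpow_le_rpow ht.le htπ ha.le⟩
  set x := u ^ γ⁻¹ with hx
  set y := v ^ γ⁻¹ with hy
  have hxm := hmem u hu huπ.le
  have hym := hmem v hv hvπ
  have hx0 : 0 < x := hxm.1
  have hder : HasDerivAt (fun t => ω (t ^ γ)) (ω' u * (γ * x ^ (γ - 1))) x := by
    have h1 : HasDerivAt (fun t : ℝ => t ^ γ) (γ * x ^ (γ - 1)) x :=
      Real.hasDerivAt_rpow_const (Or.inl hx0.ne')
    have h2 : HasDerivAt ω (ω' u) (x ^ γ) := by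
      rw [hpow u hu]
      exact hd u ⟨hu, huπ⟩
    exact h2.comp x h1
  have hslope : ω v - ω u ≤ ω' u * (γ * x ^ (γ - 1)) * (y - x) := by
    rcases lt_trichotomy x y with hxy | hxy | hxy
    · have := hc.slope_le_of_hasDerivAt hxm hym hxy hder
      rw [slope_def_field, div_le_iff₀ (sub_pos.2 hxy)] at this
      simpa only [hy, hx, hpow u hu, hpow v hv] using this
    · have : u = v := by rw [← hpow u hu, ← hpow v hv, ← hx, ← hy, hxy]
      simp [hxy, this]
    · have := hc.le_slope_of_hasDerivAt hym hxm hxy hder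
      rw [slope_def_field, le_div_iff₀ (sub_pos.2 hxy)] at this
      simp only [hy, hx, hpow u hu, hpow v hv] at this ⊢
      linarith
  have hxγ : x ^ (γ - 1) * x = u := by
    rw [← Real.rpow_add_one hx0.ne', sub_add_cancel, hpow u hu]
  have hquot : (v / u) ^ γ⁻¹ = y / x := Real.div_rpow hv.le hu.le _
  rw [hquot]
  calc ω v - ω u ≤ ω' u * (γ * x ^ (γ - 1)) * (y - x) := hslope
    _ = γ * (x ^ (γ - 1) * x) * ω' u * (y / x - 1) := by field_simp
    _ = _ := by rw [hxγ]

lemma OmegaHyp.deriv_nonneg (h : OmegaHyp ω ω' γ) (hγ : 2 < γ) {u : ℝ} (hu : 0 < u)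
    (huπ : u < π) : 0 ≤ ω' u := by
  have h1' := h.sub_le_tangent hγ hu huπ (v := π) pi_pos le_rfl
  have hm' : ω u ≤ ω π := h.2.2.1 ⟨hu, huπ.le⟩ ⟨pi_pos, le_rfl⟩ huπ.le
  have h2 : 1 < (π / u) ^ γ⁻¹ :=
    Real.one_lt_rpow ((one_lt_div hu).2 huπ) (inv_pos.2 (by linarith))
  by_contra! hneg
  have h3 : γ * u * ω' u * ((π / u) ^ γ⁻¹ - 1) < 0 :=
    mul_neg_of_neg_of_pos (mul_neg_of_pos_of_neg (by positivity) hneg) (by linarith)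
  have h4 : ω π - ω u < 0 := h1'.trans_lt h3
  linarith

lemma OmegaHyp.half_gap (h : OmegaHyp ω ω' γ) (hγ : 2 < γ) {u : ℝ} (hu : 0 < u)
    (huπ : u < π) : u * ω' u / 2 ≤ ω u - ω (u / 2) := by
  have h1 := h.sub_le_tangent hγ hu huπ (v := u / 2) (by linarith) (by linarith)
  have hγ0 : 0 < γ := by linarith
  have h2 : (u / 2 / u) ^ γ⁻¹ ≤ 1 - γ⁻¹ / 2 := by
    have h3 := rpow_one_add_le_one_add_mul_self (s := -(1 / 2)) (by norm_num) (p := γ⁻¹)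
      (by positivity) (inv_le_one_of_one_le₀ (by linarith))
    have h4 : u / 2 / u = 1 + -(1 / 2) := by
      field_simp
      norm_num
    rw [h4]
    linarith
  have hnn : 0 ≤ γ * u * ω' u := by
    have := h.deriv_nonneg hγ hu huπ
    positivity
  have h5 := mul_le_mul_of_nonneg_left (sub_le_sub_right h2 1) hnn
  have h6 : γ * u * ω' u * (1 - γ⁻¹ / 2 - 1) = -(u * ω' u / 2) := by
    field_simp
    ring
  linarith

lemma OmegaHyp.log_div_le (h : OmegaHyp ω ω' γ) {u v : ℝ} (hv : 0 < v) (hvu : v ≤ u)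
    (huπ : u < π) : Real.log (ω u / ω v) ≤ u * ω' u / ω u * Real.log (u / v) := by
  obtain ⟨hcont, hpos, -, hd, -, hα⟩ := h
  have hu : 0 < u := hv.trans_le hvu
  set A := u * ω' u / ω u with hA
  have hsub : ∀ s ∈ Set.Icc v u, 0 < s ∧ s < π := fun s hs =>
    ⟨hv.trans_le hs.1, hs.2.trans_lt huπ⟩
  have hderiv : ∀ s ∈ Set.Icc v u,
      HasDerivAt (fun t => A * Real.log t - Real.log (ω t)) (A * s⁻¹ - ω' s / ω s) s := by
    intro s hs
    obtain ⟨h0, h1⟩ := hsub s hs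
    exact ((Real.hasDerivAt_log h0.ne').const_mul A).sub
      ((hd s ⟨h0, h1⟩).log (hpos s ⟨h0, h1.le⟩).ne')
  have hmono : MonotoneOn (fun t => A * Real.log t - Real.log (ω t)) (Set.Icc v u) := by
    refine monotoneOn_of_deriv_nonneg (convex_Icc v u)
      (fun s hs => (hderiv s hs).continuousAt.continuousWithinAt)
      (fun s hs => (hderiv s (interior_subset hs)).differentiableAt.differentiableWithinAt) ?_
    intro s hs
    have hs' := interior_subset hs
    obtain ⟨h0, h1⟩ := hsub s hs'
    rw [(hderiv s hs').deriv]
    have := hα ⟨h0, h1⟩ ⟨hu, huπ⟩ hs'.2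
    have h3 : A * s⁻¹ - ω' s / ω s = (A - s * ω' s / ω s) / s := by field_simp
    rw [h3]
    exact div_nonneg (sub_nonneg.2 this) h0.le
  have := hmono ⟨le_rfl, hvu⟩ ⟨hvu, le_rfl⟩ hvu
  rw [Real.log_div (hpos u ⟨hu, huπ.le⟩).ne' (hpos v ⟨hv, (hvu.trans_lt huπ).le⟩).ne',
    Real.log_div hu.ne' hv.ne']
  simp only at this
  linarith

end Weight

/-- Decreasing radial profile dominating the normalized Richter–Sundberg integrand. -/
noncomputable def profile (a s : ℝ) : ℝ := if s < 1 then s ^ (-(1 / 2) : ℝ) else s ^ (2 * a - 2)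

lemma profile_nonneg (a : ℝ) {s : ℝ} (hs : 0 ≤ s) : 0 ≤ profile a s := by
  unfold profile
  split_ifs <;> positivity

lemma profile_antitoneOn {a : ℝ} (ha : a ≤ 1) : AntitoneOn (profile a) (Set.Ioi 0) := by
  intro s hs t ht hst
  rw [Set.mem_Ioi] at hs ht
  unfold profile
  split_ifs with h1 h2 h2
  · exact Real.rpow_le_rpow_of_nonpos hs hst (by norm_num)
  · exact absurd (hst.trans_lt h1) h2
  · exact (Real.rpow_le_one_of_one_le_of_nonpos (not_lt.1 h1) (by linarith)).trans
      (Real.one_le_rpow_of_pos_of_le_one_of_nonpos hs h2.le (by norm_num))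
  · exact Real.rpow_le_rpow_of_nonpos hs hst (by linarith)

lemma integrable_profile_abs {a : ℝ} (ha : a < 1 / 2) : Integrable (fun x : ℝ => profile a |x|) := by
  have h := integrable_fun_norm_addHaar (E := ℝ) volume (f := profile a)
  simp only [Module.finrank_self, tsub_self, pow_zero, one_smul, Real.norm_eq_abs] at h
  rw [h, ← Set.Ioo_union_Ici_eq_Ioi (zero_lt_one' ℝ), integrableOn_union,
    integrableOn_Ici_iff_integrableOn_Ioi]
  constructor
  · refine ((intervalIntegral.integrableOn_Ioo_rpow_iff zero_lt_one).2
      (by norm_num : (-1 : ℝ) < -(1 / 2))).congr_fun (fun x hx => ?_) measurableSet_Ioo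
    simp [profile, hx.2]
  · refine (integrableOn_Ioi_rpow_of_lt (by linarith : 2 * a - 2 < -1) zero_lt_one).congr_fun
      (fun x hx => ?_) measurableSet_Ioi
    simp [profile, not_lt.2 (le_of_lt (Set.mem_Ioi.1 hx))]

section Weight

variable {ω ω' : ℝ → ℝ} {γ : ℝ}

lemma OmegaHyp.rsNum_le_sq (h : OmegaHyp ω ω' γ) (hγ : 2 < γ) {u v r : ℝ} (hu : 0 < u)
    (huv : u ≤ v) (huπ : u < π) (hvπ : v ≤ π) (hr : v ≤ u + r) :
    rsNum (ω v) (ω u) ≤ 3 * ω' u ^ 2 * r ^ 2 ∧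
      rsNum (ω v) (ω u) ≤ 3 * γ ^ 2 * ω' u ^ 2 * u ^ 2 * (r / u) ^ (2 * γ⁻¹) := by
  have hv : 0 < v := hu.trans_le huv
  have hr0 : 0 ≤ r / u := div_nonneg (by linarith) hu.le
  have hγ0 : 0 < γ := by linarith
  have hle : γ⁻¹ ≤ 1 := inv_le_one_of_one_le₀ (by linarith)
  have hω' := h.deriv_nonneg hγ hu huπ
  have hmono : ω u ≤ ω v := h.2.2.1 ⟨hu, huπ.le⟩ ⟨hv, hvπ⟩ huv
  have h1 := rsNum_le_of_le (h.2.1 u ⟨hu, huπ.le⟩) hmono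
  have h2 := h.sub_le_tangent hγ hu huπ hv hvπ
  have h3 : (v / u) ^ γ⁻¹ ≤ (1 + r / u) ^ γ⁻¹ := by
    refine Real.rpow_le_rpow (by positivity) ?_ (by positivity)
    rw [div_le_iff₀ hu]
    field_simp
    exact hr
  have key : ∀ B : ℝ, (1 + r / u) ^ γ⁻¹ - 1 ≤ B →
      rsNum (ω v) (ω u) ≤ 3 * (γ * u * ω' u * B) ^ 2 := by
    intro B hB
    have h4 : ω v - ω u ≤ γ * u * ω' u * B := by
      refine h2.trans (mul_le_mul_of_nonneg_left (by linarith) (by positivity))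
    have h5 : (ω v - ω u) ^ 2 ≤ (γ * u * ω' u * B) ^ 2 :=
      pow_le_pow_left₀ (by linarith) h4 2
    linarith
  constructor
  · refine (key (γ⁻¹ * (r / u)) ?_).trans_eq ?_
    · have := rpow_one_add_le_one_add_mul_self (s := r / u) (by linarith) (p := γ⁻¹)
        (by positivity) hle
      linarith
    · field_simp
  · refine (key ((r / u) ^ γ⁻¹) ?_).trans_eq ?_
    · have := Real.rpow_add_le_add_rpow (zero_le_one' ℝ) hr0 (p := γ⁻¹) (by positivity) hle
      rw [Real.one_rpow] at this
      linarith
    · rw [mul_comm 2 γ⁻¹, Real.rpow_mul hr0, Real.rpow_two]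
      ring

lemma OmegaHyp.rsNum_div_le_of_ge (h : OmegaHyp ω ω' γ) (hγ : 2 < γ) {u v r : ℝ} (hu : 0 < u)
    (huv : u ≤ v) (huπ : u < π) (hvπ : v ≤ π) (hr0 : 0 < r) (hr : v ≤ u + r) :
    rsNum (ω v) (ω u) / r ^ 2 ≤ (3 * γ ^ 2 + 64) * ω' u ^ 2 * profile γ⁻¹ (r / u) := by
  obtain ⟨h1, h2⟩ := h.rsNum_le_sq hγ hu huv huπ hvπ hr
  have hs : 0 < r / u := div_pos hr0 hu
  have hcoef : 3 * γ ^ 2 * ω' u ^ 2 * profile γ⁻¹ (r / u) ≤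
      (3 * γ ^ 2 + 64) * ω' u ^ 2 * profile γ⁻¹ (r / u) := by
    have := profile_nonneg γ⁻¹ hs.le
    gcongr
    linarith
  refine le_trans ?_ hcoef
  rw [div_le_iff₀ (by positivity)]
  unfold profile
  split_ifs with hlt
  · refine h1.trans ?_
    have h3 : 1 ≤ (r / u) ^ (-(1 / 2) : ℝ) :=
      Real.one_le_rpow_of_pos_of_le_one_of_nonpos hs hlt.le (by norm_num)
    have h4 : 1 ≤ γ ^ 2 := by nlinarith
    calc 3 * ω' u ^ 2 * r ^ 2 = 3 * 1 * ω' u ^ 2 * 1 * r ^ 2 := by ring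
      _ ≤ _ := by gcongr
  · refine h2.trans_eq ?_
    rw [Real.rpow_sub hs, Real.rpow_two]
    field_simp

lemma log_inv_sq_le {s : ℝ} (h0 : 0 < s) (h1 : s ≤ 1) :
    Real.log s⁻¹ ^ 2 ≤ 16 * (1 - s) ^ 2 * s ^ (-(1 / 2) : ℝ) := by
  set t := s ^ (1 / 4 : ℝ) with ht
  have ht0 : 0 < t := Real.rpow_pos_of_pos h0 _
  have ht1 : t ≤ 1 := Real.rpow_le_one h0.le h1 (by norm_num)
  have hst : s = t ^ 4 := by
    rw [ht, ← Real.rpow_natCast, ← Real.rpow_mul h0.le]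
    norm_num
  have hst2 : s ^ (-(1 / 2) : ℝ) = t⁻¹ ^ 2 := by
    rw [← Real.rpow_two, ht, ← Real.rpow_neg h0.le, ← Real.rpow_mul h0.le]
    norm_num
  have hlog : Real.log s⁻¹ = 4 * Real.log t⁻¹ := by
    rw [hst, ← inv_pow, Real.log_pow]
    norm_num
  have hnn : 0 ≤ Real.log t⁻¹ := Real.log_nonneg ((one_le_inv₀ ht0).2 ht1)
  have hle : Real.log t⁻¹ ≤ (1 - s) * t⁻¹ := by
    refine (Real.log_le_sub_one_of_pos (inv_pos.2 ht0)).trans ?_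
    have h4 : t ^ 4 ≤ t := by
      simpa using pow_le_pow_of_le_one ht0.le ht1 (show 1 ≤ 4 by norm_num)
    have h5 : t⁻¹ - 1 = (1 - t) * t⁻¹ := by field_simp
    rw [h5, hst]
    gcongr
  rw [hlog, hst2]
  nlinarith [pow_le_pow_left₀ hnn hle 2]

lemma OmegaHyp.rsNum_div_le_of_lt (h : OmegaHyp ω ω' γ) (hγ : 2 < γ) {u v r : ℝ} (hv : 0 < v)
    (hvu : v < u) (huπ : u < π) (hr : u - v ≤ r) :
    rsNum (ω v) (ω u) / r ^ 2 ≤ 64 * ω' u ^ 2 * (v / u) ^ (-(1 / 2) : ℝ) := by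
  have hu : 0 < u := hv.trans hvu
  have hω' := h.deriv_nonneg hγ hu huπ
  have hωu := h.2.1 u ⟨hu, huπ.le⟩
  have hωv := h.2.1 v ⟨hv, (hvu.trans huπ).le⟩
  have hmono : ω v ≤ ω u := h.2.2.1 ⟨hv, (hvu.trans huπ).le⟩ ⟨hu, huπ.le⟩ hvu.le
  have hlog0 : 0 ≤ Real.log (ω u / ω v) := Real.log_nonneg ((one_le_div hωv).2 hmono)
  have h1 := rsNum_le_log_sq hωv hmono
  have h2 := pow_le_pow_left₀ hlog0 (h.log_div_le hv hvu.le huπ) 2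
  have h3 := log_inv_sq_le (div_pos hv hu) ((div_le_one hu).2 hvu.le)
  rw [inv_div] at h3
  have h4 : (u * (1 - v / u)) ^ 2 ≤ r ^ 2 := by
    have : u * (1 - v / u) = u - v := by field_simp
    rw [this]
    exact pow_le_pow_left₀ (by linarith) hr 2
  have hr0 : 0 < r := by linarith
  rw [div_le_iff₀ (by positivity)]
  calc rsNum (ω v) (ω u) ≤ 4 * ω u ^ 2 * Real.log (ω u / ω v) ^ 2 := h1
    _ ≤ 4 * ω u ^ 2 * (u * ω' u / ω u * Real.log (u / v)) ^ 2 := by gcongr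
    _ = 4 * (u * ω' u) ^ 2 * Real.log (u / v) ^ 2 := by field_simp
    _ ≤ 4 * (u * ω' u) ^ 2 * (16 * (1 - v / u) ^ 2 * (v / u) ^ (-(1 / 2) : ℝ)) := by gcongr
    _ = 64 * ω' u ^ 2 * (v / u) ^ (-(1 / 2) : ℝ) * (u * (1 - v / u)) ^ 2 := by ring
    _ ≤ _ := by gcongr

lemma OmegaHyp.rsNum_div_le_profile_of_lt (h : OmegaHyp ω ω' γ) (hγ : 2 < γ) {u v r d : ℝ}
    (hd : 0 < d) (hdv : d ≤ v) (hvu : v < u) (huπ : u < π) (hr : u - v ≤ r) :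
    rsNum (ω v) (ω u) / r ^ 2 ≤ (3 * γ ^ 2 + 64) * ω' u ^ 2 * profile γ⁻¹ (d / u) := by
  have hv : 0 < v := hd.trans_le hdv
  have hu : 0 < u := hv.trans hvu
  have h1 := h.rsNum_div_le_of_lt hγ hv hvu huπ hr
  have h2 : (v / u) ^ (-(1 / 2) : ℝ) ≤ profile γ⁻¹ (d / u) := by
    have h3 : profile γ⁻¹ (v / u) = (v / u) ^ (-(1 / 2) : ℝ) := if_pos ((div_lt_one hu).2 hvu)
    rw [← h3]
    exact profile_antitoneOn (inv_le_one_of_one_le₀ (by linarith)) (div_pos hd hu)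
      (div_pos hv hu) (by gcongr)
  refine h1.trans ?_
  have h5 := profile_nonneg γ⁻¹ (div_pos hd hu).le
  gcongr
  nlinarith [sq_nonneg γ]

end Weight

lemma cpt_mem_circleT (x : ℝ) : cpt x ∈ circleT := by
  simp [circleT, cpt, Complex.norm_exp_ofReal_mul_I]

lemma continuous_cpt : Continuous cpt := by
  unfold cpt
  fun_prop

lemma cpt_periodic : Function.Periodic cpt (2 * π) := by
  intro x
  unfold cpt
  push_cast
  rw [add_mul, Complex.exp_add, Complex.exp_two_pi_mul_I, mul_one]

lemma exists_cpt_eq {z : ℂ} (hz : z ∈ circleT) (a : ℝ) :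
    ∃ x ∈ Set.Ioc a (a + 2 * π), cpt x = z := by
  have hz1 : ‖z‖ = 1 := by simpa [circleT] using hz
  have h : cpt z.arg = z := by
    have := Complex.norm_mul_exp_arg_mul_I z
    rwa [hz1, Complex.ofReal_one, one_mul] at this
  obtain ⟨x, hx, hxz⟩ := cpt_periodic.exists_mem_Ioc two_pi_pos z.arg a
  exact ⟨x, hx, hxz.symm.trans h⟩

lemma norm_cpt_sub (x y : ℝ) : ‖cpt x - cpt y‖ = 2 * |Real.sin ((x - y) / 2)| := by
  have h : cpt x - cpt y = cpt y * (Complex.exp (Complex.I * ((x - y : ℝ) : ℂ)) - 1) := by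
    unfold cpt
    rw [mul_sub, ← Complex.exp_add, mul_one]
    congr 2
    push_cast
    ring
  have hy : ‖cpt y‖ = 1 := by simp [cpt, Complex.norm_exp_ofReal_mul_I]
  rw [h, norm_mul, hy, one_mul, Complex.norm_exp_I_mul_ofReal_sub_one, norm_mul]
  simp

lemma norm_cpt_sub_le (x y : ℝ) : ‖cpt x - cpt y‖ ≤ |x - y| := by
  rw [norm_cpt_sub]
  have := Real.abs_sin_le_abs (x := (x - y) / 2)
  rw [abs_div, abs_two] at this
  linarith

lemma mul_abs_le_norm_cpt_sub {x y : ℝ} (h : |x - y| ≤ π) :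
    2 / π * |x - y| ≤ ‖cpt x - cpt y‖ := by
  rw [norm_cpt_sub]
  have h2 : |(x - y) / 2| = |x - y| / 2 := by rw [abs_div, abs_two]
  have := Real.mul_abs_le_abs_sin (x := (x - y) / 2) (by rw [h2]; linarith)
  rw [h2] at this
  linarith

/-- On a component of the complement of `E` in the circle, the distance to `E` is bounded below
by the distance to one of the two endpoints. -/
lemma exists_endpoints {E : Set ℂ} (hE : IsClosed E) (hET : E ⊆ circleT) (hne : E.Nonempty)
    {ζ : ℂ} (hζ : ζ ∈ circleT \ E) :
    ∃ a ∈ E, ∃ b ∈ E, ∀ z ∈ compArc E ζ, min ‖z - a‖ ‖z - b‖ ≤ dE E z := by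
  obtain ⟨θ₀, -, hθ₀⟩ := exists_cpt_eq hζ.1 0
  obtain ⟨e, he⟩ := hne
  have hS : IsClosed (cpt ⁻¹' E) := hE.preimage continuous_cpt
  obtain ⟨e₁, he₁, he₁E⟩ := exists_cpt_eq (hET he) (θ₀ - 2 * π)
  have hper : cpt (e₁ + 2 * π) = e := (cpt_periodic e₁).trans he₁E
  have hbelow : BddAbove (cpt ⁻¹' E ∩ Set.Iic θ₀) := ⟨θ₀, fun _ h => h.2⟩
  have habove : BddBelow (cpt ⁻¹' E ∩ Set.Ici θ₀) := ⟨θ₀, fun _ h => h.2⟩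
  have he₁le : e₁ ≤ θ₀ := by linarith [he₁.2]
  have he₁mem : e₁ ∈ cpt ⁻¹' E ∩ Set.Iic θ₀ := ⟨by simpa [he₁E] using he, he₁le⟩
  have he₂mem : e₁ + 2 * π ∈ cpt ⁻¹' E ∩ Set.Ici θ₀ :=
    ⟨by simpa [hper] using he, by simp only [Set.mem_Ici]; linarith [he₁.1]⟩
  set α := sSup (cpt ⁻¹' E ∩ Set.Iic θ₀) with hα
  set β := sInf (cpt ⁻¹' E ∩ Set.Ici θ₀) with hβ
  have hαm : α ∈ cpt ⁻¹' E ∩ Set.Iic θ₀ :=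
    (hS.inter isClosed_Iic).csSup_mem ⟨_, he₁mem⟩ hbelow
  have hβm : β ∈ cpt ⁻¹' E ∩ Set.Ici θ₀ :=
    (hS.inter isClosed_Ici).csInf_mem ⟨_, he₂mem⟩ habove
  have hαE : cpt α ∈ E := hαm.1
  have hβE : cpt β ∈ E := hβm.1
  have hαle : α ≤ θ₀ := hαm.2
  have hβge : θ₀ ≤ β := hβm.2
  have hgap : ∀ x, cpt x ∈ E → α < x → x < β → False := by
    intro x hx h1 h2
    rcases le_total x θ₀ with h | h
    · exact absurd (le_csSup hbelow ⟨hx, h⟩) (not_le.2 h1)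
    · exact absurd (csInf_le habove ⟨hx, h⟩) (not_le.2 h2)
  have hαβ : β ≤ α + 2 * π := by
    have h1 : cpt (α + 2 * π) ∈ E := by rw [cpt_periodic]; exact hαE
    refine csInf_le habove ⟨h1, ?_⟩
    have := le_csSup hbelow he₁mem
    simp only [Set.mem_Ici]
    linarith [he₁.1]
  have hcl : ∀ s t : ℝ, IsClosed (cpt '' Set.Icc s t) := fun s t =>
    (isCompact_Icc.image continuous_cpt).isClosed
  have hsub : compArc E ζ ⊆ cpt '' Set.Icc α β := by
    by_contra hnot
    obtain ⟨z, hz, hzn⟩ := Set.not_subset.1 hnot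
    have hcover : circleT ⊆ cpt '' Set.Icc α β ∪ cpt '' Set.Icc β (α + 2 * π) := by
      intro w hw
      obtain ⟨x, hx, rfl⟩ := exists_cpt_eq hw α
      rcases le_total x β with h | h
      · exact Or.inl ⟨x, ⟨hx.1.le, h⟩, rfl⟩
      · exact Or.inr ⟨x, ⟨h, hx.2⟩, rfl⟩
    have hsubT : compArc E ζ ⊆ circleT \ E := connectedComponentIn_subset _ _
    have hpre : IsPreconnected (compArc E ζ) := isPreconnected_connectedComponentIn
    obtain ⟨w, hw, ⟨x, hx, rfl⟩, ⟨y, hy, hxy⟩⟩ := isPreconnected_closed_iff.1 hpre _ _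
      (hcl α β) (hcl β (α + 2 * π)) ((hsubT.trans Set.sdiff_subset).trans hcover)
      ⟨ζ, mem_connectedComponentIn hζ, θ₀, ⟨hαle, hβge⟩, hθ₀⟩
      ⟨z, hz, (hcover (hsubT hz).1).resolve_left hzn⟩
    have hwE := (hsubT hw).2
    have hxα : α < x := lt_of_le_of_ne hx.1 (by rintro rfl; exact hwE hαE)
    have hxβ : x < β := lt_of_le_of_ne hx.2 (by rintro rfl; exact hwE hβE)
    have h0 : 0 < Real.sin ((y - x) / 2) :=
      Real.sin_pos_of_pos_of_lt_pi (by linarith [hy.1]) (by linarith [hy.2])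
    have h1 := norm_cpt_sub y x
    rw [hxy, sub_self, norm_zero, abs_of_pos h0] at h1
    linarith
  refine ⟨cpt α, hαE, cpt β, hβE, fun z hz => ?_⟩
  obtain ⟨x, hx, rfl⟩ := hsub hz
  have hcomp : IsCompact E := (isCompact_sphere (0 : ℂ) 1).of_isClosed_subset hE hET
  obtain ⟨p, hp, hpd⟩ := hcomp.exists_infDist_eq_dist ⟨e, he⟩ (cpt x)
  obtain ⟨y, hy, rfl⟩ := exists_cpt_eq (hET hp) α
  have hyβ : β ≤ y := by
    by_contra! hlt
    exact hgap y hp hy.1 hlt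
  have hsin := strictConcaveOn_sin_Icc.concaveOn.min_le_of_mem_Icc
    (x := (β - x) / 2) (y := (α + 2 * π - x) / 2) (z := (y - x) / 2)
    ⟨by linarith [hx.2], by linarith [hx.1]⟩ ⟨by linarith [hx.2], by linarith [hx.1]⟩
    ⟨by linarith, by linarith [hy.2]⟩
  have hα' : ‖cpt x - cpt α‖ = 2 * Real.sin ((α + 2 * π - x) / 2) := by
    rw [norm_sub_rev, ← cpt_periodic α, norm_cpt_sub, abs_of_nonneg]
    exact Real.sin_nonneg_of_nonneg_of_le_pi (by linarith [hx.2]) (by linarith [hx.1])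
  have hβ' : ‖cpt x - cpt β‖ = 2 * Real.sin ((β - x) / 2) := by
    rw [norm_sub_rev, norm_cpt_sub, abs_of_nonneg]
    exact Real.sin_nonneg_of_nonneg_of_le_pi (by linarith [hx.2]) (by linarith [hx.1])
  have hd : dE E (cpt x) = 2 * Real.sin ((y - x) / 2) := by
    rw [dE, hpd, dist_comm, Complex.dist_eq, norm_cpt_sub, abs_of_nonneg]
    exact Real.sin_nonneg_of_nonneg_of_le_pi (by linarith [hx.2]) (by linarith [hx.1, hy.2])
  rw [hα', hβ', hd]
  rcases min_le_iff.1 hsin with h | h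
  · exact min_le_of_right_le (by linarith)
  · exact min_le_of_left_le (by linarith)

/-- Sum of the translates of a rescaled profile, dominating the profile of the chordal distance. -/
noncomputable def bump (a u φ θ : ℝ) : ℝ :=
  profile a |(π * u / 2)⁻¹ * (θ - φ)| + profile a |(π * u / 2)⁻¹ * (θ - (φ + 2 * π))|
    + profile a |(π * u / 2)⁻¹ * (θ - (φ - 2 * π))|

lemma bump_nonneg (a u φ θ : ℝ) : 0 ≤ bump a u φ θ := by
  have := fun x : ℝ => profile_nonneg a (abs_nonneg x)
  unfold bump
  linarith [this ((π * u / 2)⁻¹ * (θ - φ)), this ((π * u / 2)⁻¹ * (θ - (φ + 2 * π))),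
    this ((π * u / 2)⁻¹ * (θ - (φ - 2 * π)))]

lemma integrable_bump {a u : ℝ} (ha : a < 1 / 2) (hu : 0 < u) (φ : ℝ) :
    Integrable (bump a u φ) := by
  have hc : (π * u / 2)⁻¹ ≠ 0 := by positivity
  have h := fun c : ℝ => ((integrable_profile_abs ha).comp_mul_left' hc).comp_sub_right c
  exact ((h φ).add (h (φ + 2 * π))).add (h (φ - 2 * π))

lemma integral_bump {a u : ℝ} (ha : a < 1 / 2) (hu : 0 < u) (φ : ℝ) :
    ∫ θ, bump a u φ θ = 3 * (π * u / 2) * ∫ x : ℝ, profile a |x| := by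
  have hc : (π * u / 2)⁻¹ ≠ 0 := by positivity
  have hi := fun c : ℝ => ((integrable_profile_abs ha).comp_mul_left' hc).comp_sub_right c
  have hv : ∀ c : ℝ, ∫ θ, profile a |(π * u / 2)⁻¹ * (θ - c)|
      = π * u / 2 * ∫ x : ℝ, profile a |x| := by
    intro c
    rw [integral_sub_right_eq_self (fun θ => profile a |(π * u / 2)⁻¹ * θ|) c,
      Measure.integral_comp_mul_left (fun x => profile a |x|), inv_inv,
      abs_of_pos (by positivity), smul_eq_mul]
  have hi2 : Integrable (fun θ => profile a |(π * u / 2)⁻¹ * (θ - φ)|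
      + profile a |(π * u / 2)⁻¹ * (θ - (φ + 2 * π))|) := (hi φ).add (hi (φ + 2 * π))
  unfold bump
  rw [integral_add hi2 (hi (φ - 2 * π)),
    integral_add (hi φ) (hi (φ + 2 * π)), hv, hv, hv]
  ring

lemma profile_norm_le_bump {a u φ θ : ℝ} (ha : a ≤ 1) (hu : 0 < u) (hφ : φ ∈ Set.Ioc 0 (2 * π))
    (hθ : θ ∈ Set.Ioc 0 (2 * π)) (hne : cpt θ ≠ cpt φ) :
    profile a (‖cpt θ - cpt φ‖ / u) ≤ bump a u φ θ := by
  have key : ∀ c, cpt c = cpt φ → |θ - c| ≤ π →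
      profile a (‖cpt θ - cpt φ‖ / u) ≤ profile a |(π * u / 2)⁻¹ * (θ - c)| := by
    intro c hc h
    have h1 := mul_abs_le_norm_cpt_sub h
    have h2 : 0 < |θ - c| := abs_pos.2 fun h0 => hne (by rw [sub_eq_zero.1 h0, hc])
    rw [hc] at h1
    have h3 : |(π * u / 2)⁻¹ * (θ - c)| = 2 / π * |θ - c| / u := by
      rw [abs_mul, abs_of_pos (by positivity)]
      field_simp
    rw [h3]
    refine profile_antitoneOn ha ?_ ?_ ?_
    · exact Set.mem_Ioi.2 (by positivity)
    · exact Set.mem_Ioi.2 (div_pos (norm_pos_iff.2 (sub_ne_zero.2 hne)) hu)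
    · gcongr
  have hnn := fun x : ℝ => profile_nonneg a (abs_nonneg x)
  have n1 := hnn ((π * u / 2)⁻¹ * (θ - φ))
  have n2 := hnn ((π * u / 2)⁻¹ * (θ - (φ + 2 * π)))
  have n3 := hnn ((π * u / 2)⁻¹ * (θ - (φ - 2 * π)))
  unfold bump
  rcases le_or_gt (|θ - φ|) π with h | h
  · linarith [key φ rfl h]
  rcases lt_abs.1 h with h | h
  · have := key (φ + 2 * π) (cpt_periodic φ)
      (abs_le.2 ⟨by linarith, by linarith [hθ.2, hφ.1]⟩)
    linarith
  · have := key (φ - 2 * π) (cpt_periodic.sub_eq φ)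
      (abs_le.2 ⟨by linarith [hθ.1, hφ.2], by linarith⟩)
    linarith

section Circle

variable {ω ω' : ℝ → ℝ} {γ : ℝ} {E : Set ℂ} {ζ : ℂ}

lemma dE_le_two (hET : E ⊆ circleT) (hne : E.Nonempty) {z : ℂ} (hz : z ∈ circleT) :
    dE E z ≤ 2 := by
  obtain ⟨e, he⟩ := hne
  have h1 : ‖z‖ = 1 := by simpa [circleT] using hz
  have h2 : ‖e‖ = 1 := by simpa [circleT] using hET he
  have h3 := norm_sub_le z e
  have h4 : dE E z ≤ ‖z - e‖ := by
    rw [← dist_eq_norm]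
    exact Metric.infDist_le_dist_of_mem he
  linarith

lemma dE_pos (hE : IsClosed E) (hne : E.Nonempty) {z : ℂ} (hz : z ∉ E) : 0 < dE E z :=
  (hE.notMem_iff_infDist_pos hne).1 hz

lemma dE_le_add (z w : ℂ) : dE E z ≤ dE E w + ‖z - w‖ := by
  rw [← dist_eq_norm]
  exact Metric.infDist_le_infDist_add_dist

lemma ae_cpt_notMem (h0 : MeasureZeroOnCircle E) :
    ∀ᵐ θ : ℝ, θ ∈ Set.Ioc 0 (2 * π) → cpt θ ∉ E := by
  filter_upwards [measure_eq_zero_iff_ae_notMem.1 h0] with θ h hθ hE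
  exact h ⟨hθ, hE⟩

lemma RSker_nonneg (hω : OmegaHyp ω ω' γ) (hE : IsClosed E) (hET : E ⊆ circleT)
    (hne : E.Nonempty) (hζ : ζ ∈ circleT \ E) {z : ℂ} (hz : z ∈ circleT \ E) :
    0 ≤ RSker ω E ζ z := by
  have hpos : ∀ w ∈ circleT \ E, 0 < ω (dE E w) := fun w hw =>
    hω.2.1 _ ⟨dE_pos hE hne hw.2, by linarith [dE_le_two hET hne hw.1, pi_gt_three]⟩
  rw [RSker_eq]
  exact div_nonneg (rsNum_nonneg (hpos z hz) (hpos ζ hζ)) (sq_nonneg _)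

lemma RSker_le_of_near (hω : OmegaHyp ω ω' γ) (hγ : 2 < γ) (hE : IsClosed E)
    (hET : E ⊆ circleT) (hne : E.Nonempty) (hζ : ζ ∈ circleT \ E) {z : ℂ} (hz : z ∈ circleT \ E)
    (hnear : ‖ζ - z‖ < dE E ζ / 2) :
    RSker ω E ζ z ≤ (3 + 64 * (1 / 2 : ℝ) ^ (-(1 / 2) : ℝ)) * ω' (dE E ζ) ^ 2 := by
  have hu := dE_pos hE hne hζ.2
  have hv := dE_pos hE hne hz.2
  have hu2 := dE_le_two hET hne hζ.1
  have hv2 := dE_le_two hET hne hz.1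
  have hvu : dE E z ≤ dE E ζ + ‖ζ - z‖ := by
    rw [norm_sub_rev]
    exact dE_le_add z ζ
  have huv : dE E ζ ≤ dE E z + ‖ζ - z‖ := dE_le_add ζ z
  have huπ : dE E ζ < π := by linarith [pi_gt_three]
  have hvπ : dE E z ≤ π := by linarith [pi_gt_three]
  have hc : (0 : ℝ) ≤ (1 / 2 : ℝ) ^ (-(1 / 2) : ℝ) := by positivity
  rw [RSker_eq, add_mul]
  rcases le_or_gt (dE E ζ) (dE E z) with h | h
  · have h1 := (hω.rsNum_le_sq hγ hu h huπ hvπ hvu).1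
    have h2 := div_le_of_le_mul₀ (sq_nonneg _) (by positivity) h1
    have h3 : 0 ≤ 64 * (1 / 2 : ℝ) ^ (-(1 / 2) : ℝ) * ω' (dE E ζ) ^ 2 := by positivity
    linarith
  · have h1 := hω.rsNum_div_le_of_lt hγ hv h huπ (r := ‖ζ - z‖) (by linarith)
    have h2 : (dE E z / dE E ζ) ^ (-(1 / 2) : ℝ) ≤ (1 / 2 : ℝ) ^ (-(1 / 2) : ℝ) := by
      refine Real.rpow_le_rpow_of_nonpos (by norm_num) ?_ (by norm_num)
      rw [le_div_iff₀ hu]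
      linarith
    have h3 := mul_le_mul_of_nonneg_left h2
      (by positivity : 0 ≤ 64 * ω' (dE E ζ) ^ 2)
    have h4 : 0 ≤ 3 * ω' (dE E ζ) ^ 2 := by positivity
    linarith

lemma RSker_le_of_far (hω : OmegaHyp ω ω' γ) (hE : IsClosed E)
    (hET : E ⊆ circleT) (hne : E.Nonempty) (hζ : ζ ∈ circleT \ E) {z : ℂ} (hz : z ∈ circleT \ E)
    (hfar : dE E ζ / 2 ≤ ‖ζ - z‖) :
    RSker ω E ζ z ≤ 4 / dE E ζ ^ 2 * (ω π ^ 2 + 2 * ω (dE E ζ) ^ 2 *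
      (|Real.log (ω (dE E z))| + |Real.log (ω (dE E ζ))|)) := by
  have hu := dE_pos hE hne hζ.2
  have hv := dE_pos hE hne hz.2
  have huπ : dE E ζ ≤ π := by linarith [pi_gt_three, dE_le_two hET hne hζ.1]
  have hvπ : dE E z ≤ π := by linarith [pi_gt_three, dE_le_two hET hne hz.1]
  have hp := hω.2.1 _ ⟨hv, hvπ⟩
  have hq := hω.2.1 _ ⟨hu, huπ⟩
  have hpM := hω.2.2.1 ⟨hv, hvπ⟩ ⟨pi_pos, le_rfl⟩ hvπ
  have hr : 0 < ‖ζ - z‖ := by linarith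
  have hinv : (‖ζ - z‖ ^ 2)⁻¹ ≤ 4 / dE E ζ ^ 2 := by
    rw [show 4 / dE E ζ ^ 2 = ((dE E ζ / 2) ^ 2)⁻¹ by field_simp; norm_num]
    gcongr
  have hnum : rsNum (ω (dE E z)) (ω (dE E ζ)) ≤ ω π ^ 2 + 2 * ω (dE E ζ) ^ 2 *
      (|Real.log (ω (dE E z))| + |Real.log (ω (dE E ζ))|) := by
    unfold rsNum
    rw [Real.log_div hp.ne' hq.ne']
    have h1 : ω (dE E z) ^ 2 ≤ ω π ^ 2 := pow_le_pow_left₀ hp.le hpM 2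
    have h2 : -(Real.log (ω (dE E z)) - Real.log (ω (dE E ζ))) ≤
        |Real.log (ω (dE E z))| + |Real.log (ω (dE E ζ))| := by
      linarith [neg_abs_le (Real.log (ω (dE E z))), le_abs_self (Real.log (ω (dE E ζ)))]
    have h3 := mul_le_mul_of_nonneg_left h2 (by positivity : 0 ≤ 2 * ω (dE E ζ) ^ 2)
    linarith [sq_nonneg (ω (dE E ζ))]
  have hnn := rsNum_nonneg hp hq
  rw [RSker_eq, div_eq_mul_inv, mul_comm]
  exact mul_le_mul hinv hnum hnn (by positivity)

lemma integrableOn_RSker (hω : OmegaHyp ω ω' γ) (hγ : 2 < γ) (hE : IsClosed E)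
    (hET : E ⊆ circleT) (hne : E.Nonempty) (h0 : MeasureZeroOnCircle E) (hL : LogOmegaInt ω E)
    (hζ : ζ ∈ circleT \ E) :
    IntegrableOn (fun θ => RSker ω E ζ (cpt θ)) (Set.Ioc 0 (2 * π)) := by
  have hae : ∀ᵐ θ ∂(volume.restrict (Set.Ioc 0 (2 * π))), cpt θ ∈ circleT \ E := by
    rw [ae_restrict_iff' measurableSet_Ioc]
    filter_upwards [ae_cpt_notMem h0] with θ h hθ
    exact ⟨cpt_mem_circleT θ, h hθ⟩
  set q := ω (dE E ζ) with hq
  have hpos : ∀ w ∈ circleT \ E, 0 < ω (dE E w) := fun w hw =>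
    hω.2.1 _ ⟨dE_pos hE hne hw.2, by linarith [dE_le_two hET hne hw.1, pi_gt_three]⟩
  have hLm := hL.aestronglyMeasurable.aemeasurable
  have hmeas : AEStronglyMeasurable (fun θ => RSker ω E ζ (cpt θ))
      (volume.restrict (Set.Ioc 0 (2 * π))) := by
    have hm : AEMeasurable (fun θ => (Real.exp (Real.log (ω (dE E (cpt θ)))) ^ 2 - q ^ 2
        - 2 * q ^ 2 * (Real.log (ω (dE E (cpt θ))) - Real.log q)) / ‖ζ - cpt θ‖ ^ 2)
        (volume.restrict (Set.Ioc 0 (2 * π))) := by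
      have hn : Measurable fun θ => ‖ζ - cpt θ‖ ^ 2 := by
        have := continuous_cpt
        exact Continuous.measurable (by fun_prop)
      exact ((((Real.measurable_exp.comp_aemeasurable hLm).pow_const 2).sub_const _).sub
        ((hLm.sub_const _).const_mul _)).div hn.aemeasurable
    refine hm.aestronglyMeasurable.congr ?_
    filter_upwards [hae] with θ hθ
    rw [Real.exp_log (hpos _ hθ), RSker, Real.log_div (hpos _ hθ).ne' (hpos _ hζ).ne']
  have hint : Integrable (fun θ => (3 + 64 * (1 / 2 : ℝ) ^ (-(1 / 2) : ℝ)) * ω' (dE E ζ) ^ 2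
      + 4 / dE E ζ ^ 2 * (ω π ^ 2 + 2 * q ^ 2 *
        (|Real.log (ω (dE E (cpt θ)))| + |Real.log q|)))
      (volume.restrict (Set.Ioc 0 (2 * π))) := by
    have hc : ∀ c : ℝ, Integrable (fun _ : ℝ => c) (volume.restrict (Set.Ioc 0 (2 * π))) :=
      fun c => integrable_const c
    exact (hc _).add (((hc _).add ((Integrable.add (Integrable.abs hL) (hc _)).const_mul _)).const_mul _)
  refine hint.mono' hmeas ?_
  filter_upwards [hae] with θ hθ
  rw [Real.norm_of_nonneg (RSker_nonneg hω hE hET hne hζ hθ)]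
  have hu := dE_pos hE hne hζ.2
  rcases lt_or_ge ‖ζ - cpt θ‖ (dE E ζ / 2) with h | h
  · have h1 := RSker_le_of_near hω hγ hE hET hne hζ hθ h
    have h2 : 0 ≤ 4 / dE E ζ ^ 2 * (ω π ^ 2 + 2 * q ^ 2 *
        (|Real.log (ω (dE E (cpt θ)))| + |Real.log q|)) := by positivity
    linarith
  · have h1 := RSker_le_of_far hω hE hET hne hζ hθ h
    have h2 : 0 ≤ (3 + 64 * (1 / 2 : ℝ) ^ (-(1 / 2) : ℝ)) * ω' (dE E ζ) ^ 2 := by positivity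
    linarith

/-- Upper bound for the local Dirichlet integral over a set on which the distance to `E` is at
least `dist(ζ,E)` or the distance to one of two given points of `E`. -/
lemma locDirOn_le (hω : OmegaHyp ω ω' γ) (hγ : 2 < γ) (hE : IsClosed E)
    (hET : E ⊆ circleT) (hne : E.Nonempty) (h0 : MeasureZeroOnCircle E) (hL : LogOmegaInt ω E)
    (hζ : ζ ∈ circleT \ E) {a b : ℂ} (ha : a ∈ E) (hb : b ∈ E) {Λ : Set ℂ}
    (hΛ : ∀ z ∈ Λ, min (dE E ζ) (min ‖z - a‖ ‖z - b‖) ≤ dE E z) :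
    locDirOn ω E Λ ζ ≤ 9 / 4 * (3 * γ ^ 2 + 64) * (∫ x : ℝ, profile γ⁻¹ |x|) *
      (dE E ζ * ω' (dE E ζ) ^ 2) := by
  have hu := dE_pos hE hne hζ.2
  have huπ : dE E ζ < π := by linarith [pi_gt_three, dE_le_two hET hne hζ.1]
  set u := dE E ζ with hu_def
  have hgi : γ⁻¹ < 1 / 2 := by
    rw [inv_lt_comm₀ (by linarith) (by norm_num)]
    linarith
  have per : ∀ w ∈ circleT, ∃ φ ∈ Set.Ioc 0 (2 * π), cpt φ = w := by
    intro w hw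
    simpa using exists_cpt_eq hw 0
  obtain ⟨φ, hφ, hφζ⟩ := per ζ hζ.1
  obtain ⟨α, hα, hαa⟩ := per a (hET ha)
  obtain ⟨β, hβ, hβb⟩ := per b (hET hb)
  set K := (3 * γ ^ 2 + 64) * ω' u ^ 2 with hK
  have hK0 : 0 ≤ K := by positivity
  set g : ℝ → ℝ := fun θ => K * (bump γ⁻¹ u φ θ + bump γ⁻¹ u α θ + bump γ⁻¹ u β θ) with hg
  set S' : Set ℝ := {θ ∈ Set.Ioc 0 (2 * π) |
    min u (min ‖cpt θ - a‖ ‖cpt θ - b‖) ≤ dE E (cpt θ)} with hS'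
  have hbi := fun c => integrable_bump hgi hu c
  have hbi2 : Integrable (fun θ => bump γ⁻¹ u φ θ + bump γ⁻¹ u α θ) := (hbi φ).add (hbi α)
  have hgint : Integrable g := (hbi2.add (hbi β)).const_mul K
  have hgI : ∫ θ, g θ = K * (9 * (π * u / 2) * ∫ x : ℝ, profile γ⁻¹ |x|) := by
    rw [hg, integral_const_mul, integral_add hbi2 (hbi β), integral_add (hbi φ) (hbi α),
      integral_bump hgi hu, integral_bump hgi hu, integral_bump hgi hu]
    ring
  have hg0 : ∀ θ, 0 ≤ g θ := fun θ => mul_nonneg hK0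
    (add_nonneg (add_nonneg (bump_nonneg _ _ _ _) (bump_nonneg _ _ _ _)) (bump_nonneg _ _ _ _))
  have hfint := integrableOn_RSker hω hγ hE hET hne h0 hL hζ
  have hS'm : MeasurableSet S' := by
    have hc : Continuous fun θ => min u (min ‖cpt θ - a‖ ‖cpt θ - b‖) := by
      have := continuous_cpt
      fun_prop
    have hd : Continuous fun θ => dE E (cpt θ) :=
      (Metric.continuous_infDist_pt E).comp continuous_cpt
    exact measurableSet_Ioc.inter (isClosed_le hc hd).measurableSet
  have hsub : S' ⊆ Set.Ioc 0 (2 * π) := fun θ h => h.1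
  have hfint' := hfint.mono_set hsub
  have hpt : ∀ᵐ θ : ℝ, θ ∈ S' → RSker ω E ζ (cpt θ) ≤ g θ := by
    filter_upwards [ae_cpt_notMem h0] with θ hθE hθ
    have hθ1 := hθ.1
    have hzE := hθE hθ1
    have hv := dE_pos hE hne hzE
    have hvπ : dE E (cpt θ) ≤ π := by
      linarith [pi_gt_three, dE_le_two hET hne (cpt_mem_circleT θ)]
    have hvu : dE E (cpt θ) ≤ u + ‖ζ - cpt θ‖ := by
      rw [norm_sub_rev]
      exact dE_le_add _ ζ
    have huv : u ≤ dE E (cpt θ) + ‖ζ - cpt θ‖ := dE_le_add ζ _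
    have n1 := bump_nonneg γ⁻¹ u φ θ
    have n2 := bump_nonneg γ⁻¹ u α θ
    have n3 := bump_nonneg γ⁻¹ u β θ
    have hbump : ∀ c ∈ Set.Ioc 0 (2 * π), cpt θ ≠ cpt c →
        profile γ⁻¹ (‖cpt θ - cpt c‖ / u) ≤ bump γ⁻¹ u c θ := fun c hc hne' =>
      profile_norm_le_bump (by linarith) hu hc hθ1 hne'
    have hend : ∀ c ∈ Set.Ioc 0 (2 * π), cpt c ∈ E → dE E (cpt θ) < u →
        ‖cpt θ - cpt c‖ ≤ dE E (cpt θ) → RSker ω E ζ (cpt θ) ≤ K * bump γ⁻¹ u c θ := by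
      intro c hc hcE hlt hle
      have hne' : cpt θ ≠ cpt c := fun h => hzE (h ▸ hcE)
      exact (hω.rsNum_div_le_profile_of_lt hγ (norm_pos_iff.2 (sub_ne_zero.2 hne')) hle hlt huπ
        (by linarith)).trans (mul_le_mul_of_nonneg_left (hbump c hc hne') hK0)
    rcases le_or_gt u (dE E (cpt θ)) with h | h
    · by_cases hz : cpt θ = ζ
      · have : RSker ω E ζ (cpt θ) = 0 := by simp [RSker, hz]
        rw [this]
        exact hg0 θ
      · have hr : 0 < ‖ζ - cpt θ‖ := norm_pos_iff.2 (sub_ne_zero.2 (Ne.symm hz))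
        have h1 := hω.rsNum_div_le_of_ge hγ hu h huπ hvπ hr hvu
        have h2 := hbump φ hφ (by rwa [hφζ])
        rw [hφζ, norm_sub_rev] at h2
        refine h1.trans (mul_le_mul_of_nonneg_left ?_ hK0)
        linarith
    · have h2 := (min_le_iff.1 hθ.2).resolve_left (not_le.2 h)
      rcases min_le_iff.1 h2 with h3 | h3
      · rw [← hαa] at h3
        refine (hend α hα (by rwa [hαa]) h h3).trans (mul_le_mul_of_nonneg_left ?_ hK0)
        linarith
      · rw [← hβb] at h3
        refine (hend β hβ (by rwa [hβb]) h h3).trans (mul_le_mul_of_nonneg_left ?_ hK0)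
        linarith
  have hmono1 : circIntOn Λ (fun z => RSker ω E ζ z) ≤ ∫ θ in S', RSker ω E ζ (cpt θ) := by
    refine setIntegral_mono_set hfint' ?_ (Filter.Eventually.of_forall fun θ hθ =>
      ⟨hθ.1, hΛ _ hθ.2⟩)
    rw [Filter.EventuallyLE, ae_restrict_iff' hS'm]
    filter_upwards [ae_cpt_notMem h0] with θ hθE hθ
    exact RSker_nonneg hω hE hET hne hζ ⟨cpt_mem_circleT θ, hθE hθ.1⟩
  have hmono2 : ∫ θ in S', RSker ω E ζ (cpt θ) ≤ ∫ θ in S', g θ :=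
    setIntegral_mono_on_ae hfint' hgint.integrableOn hS'm hpt
  have hmono3 : ∫ θ in S', g θ ≤ ∫ θ, g θ :=
    setIntegral_le_integral hgint (Filter.Eventually.of_forall hg0)
  have hfin := (hmono1.trans hmono2).trans (hmono3.trans_eq hgI)
  calc locDirOn ω E Λ ζ ≤ 1 / (2 * π) * (K * (9 * (π * u / 2) * ∫ x : ℝ, profile γ⁻¹ |x|)) :=
        mul_le_mul_of_nonneg_left hfin (by positivity)
    _ = _ := by
      rw [hK]
      field_simp
      ring

lemma le_locDir (hω : OmegaHyp ω ω' γ) (hγ : 2 < γ) (hE : IsClosed E)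
    (hET : E ⊆ circleT) (hne : E.Nonempty) (h0 : MeasureZeroOnCircle E) (hL : LogOmegaInt ω E)
    (hζ : ζ ∈ circleT \ E) :
    dE E ζ * ω' (dE E ζ) ^ 2 ≤ 36 * π * locDir ω E ζ := by
  have hu := dE_pos hE hne hζ.2
  have hu2 := dE_le_two hET hne hζ.1
  have huπ : dE E ζ < π := by linarith [pi_gt_three]
  have hcomp : IsCompact E := (isCompact_sphere (0 : ℂ) 1).of_isClosed_subset hE hET
  obtain ⟨p, hp, hpd⟩ := hcomp.exists_infDist_eq_dist hne ζ
  have hpd' : ‖ζ - p‖ = dE E ζ := by rw [dE, hpd, dist_eq_norm]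
  set u := dE E ζ with hu_def
  obtain ⟨φ, hφ, rfl⟩ : ∃ φ ∈ Set.Ioc 0 (2 * π), cpt φ = p := by
    simpa using exists_cpt_eq (hET hp) 0
  obtain ⟨c, hc0, hc1, hcφ⟩ : ∃ c : ℝ, 0 ≤ c ∧ c + u / 2 ≤ 2 * π ∧
      ∀ θ ∈ Set.Ioc c (c + u / 2), |θ - φ| ≤ u / 2 := by
    rcases le_or_gt (u / 2) φ with h | h
    · refine ⟨φ - u / 2, by linarith, by linarith [hφ.2], fun θ hθ => abs_le.2 ⟨?_, ?_⟩⟩ <;>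
        linarith [hθ.1, hθ.2]
    · refine ⟨φ, hφ.1.le, by linarith [pi_gt_three], fun θ hθ => abs_le.2 ⟨?_, ?_⟩⟩ <;>
        linarith [hθ.1, hθ.2]
  have hsub : Set.Ioc c (c + u / 2) ⊆ Set.Ioc 0 (2 * π) := Set.Ioc_subset_Ioc hc0 hc1
  have hfint := integrableOn_RSker hω hγ hE hET hne h0 hL hζ
  have hpt : ∀ᵐ θ : ℝ, θ ∈ Set.Ioc c (c + u / 2) → ω' u ^ 2 / 9 ≤ RSker ω E ζ (cpt θ) := by
    filter_upwards [ae_cpt_notMem h0] with θ hθE hθ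
    have hzE := hθE (hsub hθ)
    have hv := dE_pos hE hne hzE
    have hdp : ‖cpt θ - cpt φ‖ ≤ u / 2 := (norm_cpt_sub_le θ φ).trans (hcφ θ hθ)
    have hvu : dE E (cpt θ) ≤ u / 2 := by
      refine le_trans ?_ hdp
      rw [← dist_eq_norm]
      exact Metric.infDist_le_dist_of_mem hp
    have hr : ‖ζ - cpt θ‖ ≤ 3 * u / 2 := by
      have := norm_sub_le_norm_sub_add_norm_sub ζ (cpt φ) (cpt θ)
      rw [norm_sub_rev (cpt φ)] at this
      linarith
    have hr0 : 0 < ‖ζ - cpt θ‖ := by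
      have : u ≤ dE E (cpt θ) + ‖ζ - cpt θ‖ := dE_le_add ζ _
      linarith
    have hmem : ∀ t, 0 < t → t ≤ u → t ∈ Set.Ioc 0 π := fun t h1 h2 => ⟨h1, by linarith⟩
    have hωv := hω.2.1 _ (hmem _ hv (by linarith))
    have hm1 := hω.2.2.1 (hmem _ hv (by linarith)) (hmem (u / 2) (by linarith) (by linarith)) hvu
    have hgap := hω.half_gap hγ hu huπ
    have hω' := hω.deriv_nonneg hγ hu huπ
    have huω : 0 ≤ u * ω' u / 2 := by positivity
    have h1 := sub_sq_le_rsNum hωv (q := ω u) (by linarith)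
    have h2 : (u * ω' u / 2) ^ 2 ≤ (ω u - ω (dE E (cpt θ))) ^ 2 :=
      pow_le_pow_left₀ huω (by linarith) 2
    rw [RSker_eq, le_div_iff₀ (by positivity)]
    calc ω' u ^ 2 / 9 * ‖ζ - cpt θ‖ ^ 2 ≤ ω' u ^ 2 / 9 * (3 * u / 2) ^ 2 := by gcongr
      _ = (u * ω' u / 2) ^ 2 := by ring
      _ ≤ _ := h2.trans h1
  have h1 : ∫ θ in Set.Ioc c (c + u / 2), ω' u ^ 2 / 9 = u / 2 * (ω' u ^ 2 / 9) := by
    rw [setIntegral_const, Real.volume_real_Ioc_of_le (by linarith), smul_eq_mul]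
    ring
  have h2 : ∫ θ in Set.Ioc c (c + u / 2), ω' u ^ 2 / 9 ≤
      ∫ θ in Set.Ioc c (c + u / 2), RSker ω E ζ (cpt θ) :=
    setIntegral_mono_on_ae (integrableOn_const (by simp)) (hfint.mono_set hsub)
      measurableSet_Ioc hpt
  have h3 : ∫ θ in Set.Ioc c (c + u / 2), RSker ω E ζ (cpt θ) ≤
      circInt (fun z => RSker ω E ζ z) := by
    refine setIntegral_mono_set hfint ?_ (Filter.Eventually.of_forall hsub)
    rw [Filter.EventuallyLE, ae_restrict_iff' measurableSet_Ioc]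
    filter_upwards [ae_cpt_notMem h0] with θ hθE hθ
    exact RSker_nonneg hω hE hET hne hζ ⟨cpt_mem_circleT θ, hθE hθ⟩
  have h4 : 36 * π * locDir ω E ζ = 18 * circInt (fun z => RSker ω E ζ z) := by
    unfold locDir
    field_simp
    ring
  rw [h4]
  linarith

end Circle

lemma RSker_empty (ω : ℝ → ℝ) (ζ z : ℂ) : RSker ω ∅ ζ z = 0 := by
  have h : Real.log (ω 0 / ω 0) = 0 := by
    rcases eq_or_ne (ω 0) 0 with h | h <;> simp [h]
  simp [RSker, dE, h]

/-- For `ω` as in the standing hypotheses and any Carleson set `E` of measure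
zero, for every `ζ ∈ 𝕋∖E`:
(i) `D_{ζ,I(ζ,E)}(f_{ω,E}) ≲ dist(ζ,E)ω'(dist(ζ,E))²`;
(ii) `D_{ζ,Σ(ζ,E)}(f_{ω,E}) ≲ dist(ζ,E)ω'(dist(ζ,E))²`;
(iii) `D_ζ(f_{ω,E}) ≳ dist(ζ,E)ω'(dist(ζ,E))²`;
with implied constants depending only on `γ`. -/
theorem statement3 :
    ∀ γ : ℝ, 2 < γ → ∃ C > (0:ℝ),
      ∀ (ω ω' : ℝ → ℝ) (E : Set ℂ), OmegaHyp ω ω' γ →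
        IsClosed E → E ⊆ circleT → MeasureZeroOnCircle E → CarlesonSet E →
        LogOmegaInt ω E →
        ∀ ζ ∈ circleT \ E,
          locDirOn ω E (compArc E ζ) ζ ≤ C * (dE E ζ * (ω' (dE E ζ)) ^ 2) ∧
          locDirOn ω E (SigmaSet E ζ) ζ ≤ C * (dE E ζ * (ω' (dE E ζ)) ^ 2) ∧
          dE E ζ * (ω' (dE E ζ)) ^ 2 ≤ C * locDir ω E ζ := by
  intro γ hγ
  set M := 9 / 4 * (3 * γ ^ 2 + 64) * ∫ x : ℝ, profile γ⁻¹ |x| with hM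
  have hM0 : 0 ≤ M := mul_nonneg (by positivity)
    (integral_nonneg fun x => profile_nonneg _ (abs_nonneg x))
  refine ⟨M + 36 * π, by positivity, ?_⟩
  intro ω ω' E hω hE hET h0 _ hL ζ hζ
  rcases E.eq_empty_or_nonempty with rfl | hne
  · simp [locDirOn, locDir, circIntOn, circInt, RSker_empty, dE]
  have hX : 0 ≤ dE E ζ * ω' (dE E ζ) ^ 2 :=
    mul_nonneg (dE_pos hE hne hζ.2).le (sq_nonneg _)
  have hup : ∀ {a b : ℂ} {Λ : Set ℂ}, a ∈ E → b ∈ E →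
      (∀ z ∈ Λ, min (dE E ζ) (min ‖z - a‖ ‖z - b‖) ≤ dE E z) →
      locDirOn ω E Λ ζ ≤ (M + 36 * π) * (dE E ζ * ω' (dE E ζ) ^ 2) := fun ha hb hΛ =>
    (locDirOn_le hω hγ hE hET hne h0 hL hζ ha hb hΛ).trans
      (mul_le_mul_of_nonneg_right (by linarith [pi_pos]) hX)
  obtain ⟨a, ha, b, hb, hab⟩ := exists_endpoints hE hET hne hζ
  have hlow := le_locDir hω hγ hE hET hne h0 hL hζ
  have hpos : 0 ≤ locDir ω E ζ :=
    nonneg_of_mul_nonneg_right (hX.trans hlow) (by positivity)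
  refine ⟨hup ha hb fun z hz => min_le_of_right_le (hab z hz),
    hup ha hb fun z hz => min_le_of_left_le hz.2, hlow.trans ?_⟩
  exact mul_le_mul_of_nonneg_right (by linarith) hpos
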